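/- Quantitative generalization of the Wigner-Araki-Yanase theorem: let (ℂᵐ, ξ, U, M) be a finite-dimensional measuring process for ℂⁿ, and let L₁ be a Hermitian n×n matrix and L₂ a Hermitian m×m matrix such that U(L₁⊗I + I⊗L₂) = (L₁⊗I + I⊗L₂)U (additive conservation law) and ML₂ = L₂M. Then for every Hermitian n×n matrix A and every density matrix ρ on ℂⁿ, ε(A;ρ)²·(4·σ(L₁;ρ)² + 4·σ(L₂;|ξ⟩⟨ξ|)²) ≥ |Tr[(AL₁ − L₁A)ρ]|². -/

import Mathlib

open ComplexOrder Kronecker Matrix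

/-- The rank-one projection `|ξ⟩⟨ξ|` onto a vector `ξ`. -/
noncomputable def rankOneProj {m : ℕ} (ξ : Fin m → ℂ) : Matrix (Fin m) (Fin m) ℂ :=
  Matrix.vecMulVec ξ (star ξ)

/-- The partial trace over the second tensor factor. -/
noncomputable def trK {n m : ℕ} (X : Matrix (Fin n × Fin m) (Fin n × Fin m) ℂ) :
    Matrix (Fin n) (Fin n) ℂ :=
  Matrix.of fun i j => ∑ k, X (i, k) (j, k)

/-- The noise operator `N(A) = U†(I⊗M)U − A⊗I` of a measuring process. -/
noncomputable def noiseOp {n m : ℕ} (U : Matrix (Fin n × Fin m) (Fin n × Fin m) ℂ)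
    (M : Matrix (Fin m) (Fin m) ℂ) (A : Matrix (Fin n) (Fin n) ℂ) :
    Matrix (Fin n × Fin m) (Fin n × Fin m) ℂ :=
  Uᴴ * ((1 : Matrix (Fin n) (Fin n) ℂ) ⊗ₖ M) * U - A ⊗ₖ (1 : Matrix (Fin m) (Fin m) ℂ)

/-- The disturbance operator `D(B) = U†(B⊗I)U − B⊗I` of a measuring process. -/
noncomputable def distOp {n m : ℕ} (U : Matrix (Fin n × Fin m) (Fin n × Fin m) ℂ)
    (B : Matrix (Fin n) (Fin n) ℂ) :
    Matrix (Fin n × Fin m) (Fin n × Fin m) ℂ :=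
  Uᴴ * (B ⊗ₖ (1 : Matrix (Fin m) (Fin m) ℂ)) * U - B ⊗ₖ (1 : Matrix (Fin m) (Fin m) ℂ)

/-- The rms noise `ε(A;ρ) = (Tr[N(A)²(ρ⊗|ξ⟩⟨ξ|)])^{1/2}`. -/
noncomputable def rmsNoise {n m : ℕ} (U : Matrix (Fin n × Fin m) (Fin n × Fin m) ℂ)
    (M : Matrix (Fin m) (Fin m) ℂ) (ξ : Fin m → ℂ) (A ρ : Matrix (Fin n) (Fin n) ℂ) : ℝ :=
  Real.sqrt ((noiseOp U M A * noiseOp U M A * (ρ ⊗ₖ rankOneProj ξ)).trace.re)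

/-- The rms disturbance `η(B;ρ) = (Tr[D(B)²(ρ⊗|ξ⟩⟨ξ|)])^{1/2}`. -/
noncomputable def rmsDist {n m : ℕ} (U : Matrix (Fin n × Fin m) (Fin n × Fin m) ℂ)
    (ξ : Fin m → ℂ) (B ρ : Matrix (Fin n) (Fin n) ℂ) : ℝ :=
  Real.sqrt ((distOp U B * distOp U B * (ρ ⊗ₖ rankOneProj ξ)).trace.re)

/-- The standard deviation of a Hermitian matrix `C` in the state `τ`:
`σ(C;τ)² = Tr[C²τ] − (Tr[Cτ])²`. -/
noncomputable def stddev {k : ℕ} (C τ : Matrix (Fin k) (Fin k) ℂ) : ℝ :=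
  Real.sqrt ((C * C * τ).trace.re - ((C * τ).trace.re) ^ 2)

/-!
Let `L = L₁ ⊗ 1 + 1 ⊗ L₂` be the conserved quantity and `H = U†(1 ⊗ M)U` the meter after the
interaction. The conservation law and `[M, L₂] = 0` give `[H, L] = 0`, so the noise
`N = H - A ⊗ 1` satisfies `[N, L] = -[A, L₁] ⊗ 1`. Robertson's inequality for `N` and `L` in the
product state `ρ ⊗ |ξ⟩⟨ξ|` bounds `|Tr[[A, L₁]ρ]|²` by `4 Tr[N²(ρ ⊗ |ξ⟩⟨ξ|)]` times the variance
of `L`, and in a product state that variance is the sum of those of `L₁` and `L₂`.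
-/

section Robertson

variable {𝕜 ι : Type*} [RCLike 𝕜] [Fintype ι]

/-- The variance `Tr[C²τ] − (Tr[Cτ])²` of the observable `C` in the state `τ`. Only the real parts
of the traces enter; for Hermitian `C` and `τ` the traces are real. -/
def stateVariance (C τ : Matrix ι ι 𝕜) : ℝ :=
  RCLike.re (C * C * τ).trace - RCLike.re (C * τ).trace ^ 2

/-- The observable `C − Tr[Cτ]·1`, whose second moment in the state `τ` is the variance of `C`. -/
def centered [DecidableEq ι] (C τ : Matrix ι ι 𝕜) : Matrix ι ι 𝕜 :=
  C - (RCLike.re (C * τ).trace : 𝕜) • 1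

theorem trace_conjTranspose_mul {τ : Matrix ι ι 𝕜} (hτ : τ.IsHermitian) (X : Matrix ι ι 𝕜) :
    (Xᴴ * τ).trace = starRingEnd 𝕜 (X * τ).trace := by
  rw [starRingEnd_apply, ← trace_conjTranspose, conjTranspose_mul, hτ.eq, trace_mul_comm]

theorem ofReal_re_trace_mul {C τ : Matrix ι ι 𝕜} (hC : C.IsHermitian) (hτ : τ.IsHermitian) :
    (RCLike.re (C * τ).trace : 𝕜) = (C * τ).trace := by
  rw [← RCLike.conj_eq_iff_re, ← trace_conjTranspose_mul hτ, hC.eq]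

theorem re_trace_conjTranspose_mul_self_mul_nonneg {κ : Type*} [Fintype κ] (X : Matrix κ ι 𝕜)
    {τ : Matrix ι ι 𝕜} (hτ : τ.PosSemidef) : 0 ≤ RCLike.re (Xᴴ * X * τ).trace := by
  have h := (hτ.mul_mul_conjTranspose_same X).trace_nonneg
  rw [trace_mul_cycle] at h
  exact (RCLike.nonneg_iff.mp h).1

theorem norm_trace_conjTranspose_mul_mul_sq_le (X Y : Matrix ι ι 𝕜) {τ : Matrix ι ι 𝕜}
    (hτ : τ.PosSemidef) :
    ‖(Xᴴ * Y * τ).trace‖ ^ 2 ≤ RCLike.re (Xᴴ * X * τ).trace * RCLike.re (Yᴴ * Y * τ).trace := by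
  let _ := τ.toMatrixSeminormedAddCommGroup hτ
  let _ := τ.toMatrixInnerProductSpace hτ
  have inner_eq (V W : Matrix ι ι 𝕜) : inner 𝕜 V W = (Vᴴ * W * τ).trace :=
    trace_mul_cycle W τ Vᴴ
  have cauchy_schwarz := inner_mul_inner_self_le (𝕜 := 𝕜) X Y
  rwa [norm_inner_symm Y X, ← sq, inner_eq, inner_eq, inner_eq] at cauchy_schwarz

theorem norm_trace_commutator_mul_sq_le {B C τ : Matrix ι ι 𝕜} (hB : B.IsHermitian)
    (hC : C.IsHermitian) (hτ : τ.PosSemidef) :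
    ‖((B * C - C * B) * τ).trace‖ ^ 2 ≤
      4 * (RCLike.re (B * B * τ).trace * RCLike.re (C * C * τ).trace) := by
  have cauchy_schwarz := norm_trace_conjTranspose_mul_mul_sq_le B C hτ
  rw [hB.eq, hC.eq] at cauchy_schwarz
  have trace_swap : (C * B * τ).trace = starRingEnd 𝕜 (B * C * τ).trace := by
    rw [← trace_conjTranspose_mul hτ.isHermitian, conjTranspose_mul, hB.eq, hC.eq]
  calc ‖((B * C - C * B) * τ).trace‖ ^ 2
      = ‖(B * C * τ).trace - starRingEnd 𝕜 (B * C * τ).trace‖ ^ 2 := by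
        rw [Matrix.sub_mul, trace_sub, trace_swap]
    _ ≤ (‖(B * C * τ).trace‖ + ‖(B * C * τ).trace‖) ^ 2 := by
        gcongr
        exact (norm_sub_le _ _).trans_eq (by rw [RCLike.norm_conj])
    _ = 4 * ‖(B * C * τ).trace‖ ^ 2 := by ring
    _ ≤ _ := by gcongr

section Centered

variable [DecidableEq ι]

theorem isHermitian_centered {C : Matrix ι ι 𝕜} (hC : C.IsHermitian) (τ : Matrix ι ι 𝕜) :
    (centered C τ).IsHermitian :=
  hC.sub (isHermitian_one.smul (RCLike.conj_ofReal _))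

theorem commutator_centered (B C τ : Matrix ι ι 𝕜) :
    B * centered C τ - centered C τ * B = B * C - C * B := by
  simp only [centered, Matrix.mul_sub, Matrix.sub_mul, Matrix.mul_smul, Matrix.smul_mul,
    Matrix.mul_one, Matrix.one_mul, sub_sub_sub_cancel_right]

theorem re_trace_centered_mul_self_mul (C : Matrix ι ι 𝕜) {τ : Matrix ι ι 𝕜} (hτ1 : τ.trace = 1) :
    RCLike.re (centered C τ * centered C τ * τ).trace = stateVariance C τ := by
  simp only [centered, stateVariance, Matrix.sub_mul, Matrix.mul_sub, Matrix.smul_mul,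
    Matrix.mul_smul, Matrix.one_mul, trace_sub, trace_smul, hτ1, smul_eq_mul,
    mul_one, map_sub, RCLike.re_ofReal_mul, RCLike.ofReal_re]
  ring

end Centered

theorem stateVariance_nonneg {C τ : Matrix ι ι 𝕜} (hC : C.IsHermitian) (hτ : τ.PosSemidef)
    (hτ1 : τ.trace = 1) : 0 ≤ stateVariance C τ := by
  classical
  have h := re_trace_conjTranspose_mul_self_mul_nonneg (centered C τ) hτ
  rwa [(isHermitian_centered hC τ).eq, re_trace_centered_mul_self_mul C hτ1] at h

theorem norm_trace_commutator_mul_sq_le_stateVariance {B C τ : Matrix ι ι 𝕜} (hB : B.IsHermitian)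
    (hC : C.IsHermitian) (hτ : τ.PosSemidef) (hτ1 : τ.trace = 1) :
    ‖((B * C - C * B) * τ).trace‖ ^ 2 ≤
      4 * (RCLike.re (B * B * τ).trace * stateVariance C τ) := by
  classical
  rw [← commutator_centered B C τ, ← re_trace_centered_mul_self_mul C hτ1]
  exact norm_trace_commutator_mul_sq_le hB (isHermitian_centered hC τ) hτ

end Robertson

theorem isHermitian_kronecker {R ι κ : Type*} [CommMagma R] [StarMul R] {A : Matrix ι ι R}
    {B : Matrix κ κ R} (hA : A.IsHermitian) (hB : B.IsHermitian) : (A ⊗ₖ B).IsHermitian := by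
  rw [IsHermitian, conjTranspose_kronecker, hA.eq, hB.eq]

theorem commute_conjTranspose_mul_mul {R ι : Type*} [Semiring R] [StarRing R] [Fintype ι]
    {U H L : Matrix ι ι R} (hL : L.IsHermitian) (hUL : Commute U L) (hHL : Commute H L) :
    Commute (Uᴴ * H * U) L := by
  have hUstar : Commute Uᴴ L := by
    simpa only [star_eq_conjTranspose, hL.eq] using hUL.star_star
  exact (hUstar.mul_left hHL).mul_left hUL

section HeisenbergMeter

variable {R ι κ : Type*} [Fintype ι] [Fintype κ] [DecidableEq ι]

/-- The meter `1 ⊗ M` after the interaction `U`, in the Heisenberg picture: `U†(1 ⊗ M)U`. -/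
def heisenbergMeter [Semiring R] [StarRing R] (U : Matrix (ι × κ) (ι × κ) R) (M : Matrix κ κ R) :
    Matrix (ι × κ) (ι × κ) R :=
  Uᴴ * (1 ⊗ₖ M) * U

theorem isHermitian_heisenbergMeter [CommSemiring R] [StarRing R]
    (U : Matrix (ι × κ) (ι × κ) R) {M : Matrix κ κ R} (hM : M.IsHermitian) :
    (heisenbergMeter U M).IsHermitian :=
  isHermitian_conjTranspose_mul_mul U (isHermitian_kronecker isHermitian_one hM)

end HeisenbergMeter

section KroneckerSum

variable {R ι κ : Type*} [DecidableEq ι] [DecidableEq κ]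

/-- The Kronecker sum `L₁ ⊗ 1 + 1 ⊗ L₂`: the total of an additive quantity over the two factors
of a composite system. -/
def kroneckerSum [Semiring R] (L₁ : Matrix ι ι R) (L₂ : Matrix κ κ R) :
    Matrix (ι × κ) (ι × κ) R :=
  L₁ ⊗ₖ 1 + 1 ⊗ₖ L₂

theorem isHermitian_kroneckerSum [CommSemiring R] [StarRing R] {L₁ : Matrix ι ι R}
    {L₂ : Matrix κ κ R} (hL₁ : L₁.IsHermitian) (hL₂ : L₂.IsHermitian) :
    (kroneckerSum L₁ L₂).IsHermitian :=
  (isHermitian_kronecker hL₁ isHermitian_one).add (isHermitian_kronecker isHermitian_one hL₂)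

variable [Fintype ι] [Fintype κ]

theorem commute_one_kronecker_kroneckerSum [CommSemiring R] (L₁ : Matrix ι ι R)
    {M L₂ : Matrix κ κ R} (h : Commute M L₂) :
    Commute ((1 : Matrix ι ι R) ⊗ₖ M) (kroneckerSum L₁ L₂) := by
  simp only [Commute, SemiconjBy, kroneckerSum, Matrix.mul_add, Matrix.add_mul,
    ← mul_kronecker_mul, Matrix.one_mul, Matrix.mul_one, h.eq]

theorem commutator_kronecker_one_kroneckerSum [CommRing R] (A L₁ : Matrix ι ι R)
    (L₂ : Matrix κ κ R) :
    A ⊗ₖ 1 * kroneckerSum L₁ L₂ - kroneckerSum L₁ L₂ * A ⊗ₖ 1 =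
      (A * L₁ - L₁ * A) ⊗ₖ (1 : Matrix κ κ R) := by
  simp only [kroneckerSum, Matrix.mul_add, Matrix.add_mul, ← mul_kronecker_mul, Matrix.one_mul,
    Matrix.mul_one, add_sub_add_right_eq_sub]
  rw [sub_eq_iff_eq_add, ← add_kronecker, sub_add_cancel]

theorem commutator_sub_kronecker_one_kroneckerSum [CommRing R]
    {H : Matrix (ι × κ) (ι × κ) R} (A : Matrix ι ι R) {L₁ : Matrix ι ι R} {L₂ : Matrix κ κ R}
    (hHL : Commute H (kroneckerSum L₁ L₂)) :
    (H - A ⊗ₖ 1) * kroneckerSum L₁ L₂ - kroneckerSum L₁ L₂ * (H - A ⊗ₖ 1) =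
      -((A * L₁ - L₁ * A) ⊗ₖ (1 : Matrix κ κ R)) := by
  rw [Matrix.sub_mul, Matrix.mul_sub, hHL.eq, sub_sub_sub_cancel_left, ← neg_sub,
    commutator_kronecker_one_kroneckerSum]

theorem stateVariance_kroneckerSum {𝕜 : Type*} [RCLike 𝕜] {L₁ ρ : Matrix ι ι 𝕜}
    {L₂ ω : Matrix κ κ 𝕜} (hL₁ : L₁.IsHermitian) (hρ : ρ.IsHermitian) (hρ1 : ρ.trace = 1)
    (hω1 : ω.trace = 1) :
    stateVariance (kroneckerSum L₁ L₂) (ρ ⊗ₖ ω) = stateVariance L₁ ρ + stateVariance L₂ ω := by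
  simp only [stateVariance, kroneckerSum, Matrix.mul_add, Matrix.add_mul, ← mul_kronecker_mul,
    trace_add, trace_kronecker, hρ1, hω1, mul_one, one_mul, map_add]
  rw [← ofReal_re_trace_mul hL₁ hρ, RCLike.re_ofReal_mul, RCLike.ofReal_re]
  ring

theorem commute_heisenbergMeter_kroneckerSum [CommSemiring R] [StarRing R]
    {U : Matrix (ι × κ) (ι × κ) R} {L₁ : Matrix ι ι R} {M L₂ : Matrix κ κ R}
    (hL₁ : L₁.IsHermitian) (hL₂ : L₂.IsHermitian) (hU : Commute U (kroneckerSum L₁ L₂))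
    (hM : Commute M L₂) : Commute (heisenbergMeter U M) (kroneckerSum L₁ L₂) :=
  commute_conjTranspose_mul_mul (isHermitian_kroneckerSum hL₁ hL₂) hU
    (commute_one_kronecker_kroneckerSum L₁ hM)

end KroneckerSum

/-- In a measuring process `H` is `heisenbergMeter U M`, so that `H - A ⊗ 1` is the noise. -/
theorem quantitative_WAY_general {𝕜 ι κ : Type*} [RCLike 𝕜] [Fintype ι] [Fintype κ]
    [DecidableEq ι] [DecidableEq κ] {H : Matrix (ι × κ) (ι × κ) 𝕜} (hH : H.IsHermitian)
    {L₁ : Matrix ι ι 𝕜} (hL₁ : L₁.IsHermitian) {L₂ : Matrix κ κ 𝕜} (hL₂ : L₂.IsHermitian)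
    (hHL : Commute H (kroneckerSum L₁ L₂)) {A : Matrix ι ι 𝕜} (hA : A.IsHermitian)
    {ρ : Matrix ι ι 𝕜} (hρ : ρ.PosSemidef) (hρ1 : ρ.trace = 1)
    {ω : Matrix κ κ 𝕜} (hω : ω.PosSemidef) (hω1 : ω.trace = 1) :
    ‖((A * L₁ - L₁ * A) * ρ).trace‖ ^ 2 ≤
      RCLike.re ((H - A ⊗ₖ 1) * (H - A ⊗ₖ 1) * (ρ ⊗ₖ ω)).trace *
        (4 * stateVariance L₁ ρ + 4 * stateVariance L₂ ω) := by
  have hN : (H - A ⊗ₖ 1).IsHermitian := hH.sub (isHermitian_kronecker hA isHermitian_one)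
  have hτ1 : (ρ ⊗ₖ ω).trace = 1 := by rw [trace_kronecker, hρ1, hω1, one_mul]
  have robertson := norm_trace_commutator_mul_sq_le_stateVariance hN
    (isHermitian_kroneckerSum hL₁ hL₂) (hρ.kronecker hω) hτ1
  rw [commutator_sub_kronecker_one_kroneckerSum A hHL, Matrix.neg_mul, trace_neg, norm_neg,
    ← mul_kronecker_mul, trace_kronecker, Matrix.one_mul, hω1, mul_one,
    stateVariance_kroneckerSum hL₁ hρ.isHermitian hρ1 hω1] at robertson
  linarith

theorem posSemidef_rankOneProj {m : ℕ} (ξ : Fin m → ℂ) : (rankOneProj ξ).PosSemidef :=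
  posSemidef_vecMulVec_self_star ξ

theorem trace_rankOneProj {m : ℕ} (ξ : Fin m → ℂ) : (rankOneProj ξ).trace = star ξ ⬝ᵥ ξ := by
  rw [rankOneProj, trace_vecMulVec, dotProduct_comm]

theorem stddev_sq {k : ℕ} {C τ : Matrix (Fin k) (Fin k) ℂ} (hC : C.IsHermitian)
    (hτ : τ.PosSemidef) (hτ1 : τ.trace = 1) : stddev C τ ^ 2 = stateVariance C τ :=
  Real.sq_sqrt (stateVariance_nonneg hC hτ hτ1)

theorem rmsNoise_sq {n m : ℕ} (U : Matrix (Fin n × Fin m) (Fin n × Fin m) ℂ)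
    {M : Matrix (Fin m) (Fin m) ℂ} (hM : M.IsHermitian) (ξ : Fin m → ℂ)
    {A ρ : Matrix (Fin n) (Fin n) ℂ} (hA : A.IsHermitian) (hρ : ρ.PosSemidef) :
    rmsNoise U M ξ A ρ ^ 2 =
      (noiseOp U M A * noiseOp U M A * (ρ ⊗ₖ rankOneProj ξ)).trace.re := by
  have hN : (noiseOp U M A).IsHermitian :=
    (isHermitian_heisenbergMeter U hM).sub (isHermitian_kronecker hA isHermitian_one)
  have h := re_trace_conjTranspose_mul_self_mul_nonneg (noiseOp U M A)
    (hρ.kronecker (posSemidef_rankOneProj ξ))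
  rw [hN.eq] at h
  exact Real.sq_sqrt h

/-- Quantitative generalization of the Wigner-Araki-Yanase theorem. -/
theorem quantitative_WAY {n m : ℕ} (hn : 0 < n) (hm : 0 < m)
    (ξ : Fin m → ℂ) (hξ : star ξ ⬝ᵥ ξ = 1)
    (U : Matrix (Fin n × Fin m) (Fin n × Fin m) ℂ)
    (hU : U * Uᴴ = 1) (hU' : Uᴴ * U = 1)
    (M : Matrix (Fin m) (Fin m) ℂ) (hM : M.IsHermitian)
    (L₁ : Matrix (Fin n) (Fin n) ℂ) (hL₁ : L₁.IsHermitian)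
    (L₂ : Matrix (Fin m) (Fin m) ℂ) (hL₂ : L₂.IsHermitian)
    (hcons : U * (L₁ ⊗ₖ (1 : Matrix (Fin m) (Fin m) ℂ)
        + (1 : Matrix (Fin n) (Fin n) ℂ) ⊗ₖ L₂)
      = (L₁ ⊗ₖ (1 : Matrix (Fin m) (Fin m) ℂ)
        + (1 : Matrix (Fin n) (Fin n) ℂ) ⊗ₖ L₂) * U)
    (hML₂ : M * L₂ = L₂ * M) :
    ∀ (A : Matrix (Fin n) (Fin n) ℂ), A.IsHermitian →
      ∀ ρ : Matrix (Fin n) (Fin n) ℂ, ρ.PosSemidef → ρ.trace = 1 →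
        rmsNoise U M ξ A ρ ^ 2 * (4 * stddev L₁ ρ ^ 2 + 4 * stddev L₂ (rankOneProj ξ) ^ 2) ≥
          ‖((A * L₁ - L₁ * A) * ρ).trace‖ ^ 2 := by
  intro A hA ρ hρ hρ1
  have hω := posSemidef_rankOneProj ξ
  have hω1 := (trace_rankOneProj ξ).trans hξ
  rw [rmsNoise_sq U hM ξ hA hρ, stddev_sq hL₁ hρ hρ1, stddev_sq hL₂ hω hω1]
  exact quantitative_WAY_general (isHermitian_heisenbergMeter U hM) hL₁ hL₂
    (commute_heisenbergMeter_kroneckerSum hL₁ hL₂ hcons hML₂) hA hρ hρ1 hω hω1
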